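/- Let n | q + 1, r and δ positive integers with δ even, (r + δ - 1) | n, ν = n/(r+δ-1), and α a primitive n-th root of unity in F_{q^2}. For i ∈ {0,...,⌊(r-1)/2⌋} and ℓ ∈ {0,...,⌊(ν-2)/2⌋}, let B = {α^0, α^{±1}, ..., α^{±(δ-2)/2}} and A = {α^0, α^{±1}, ..., α^{±(ℓ(r+δ-1)+i)}} ∪ {α^{(ℓ+1)(r+δ-1)}, α^{(ℓ+2)(r+δ-1)}, ..., α^{(ν-ℓ-1)(r+δ-1)}}. Then the cyclic code C_{AB} of length n over F_q with complete defining set AB is an optimal cyclic (r, δ)-LRC with dimension (ν - 2ℓ)r - 2i and minimum distance δ + 2i + 2ℓ(r + δ - 1). -/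

import Mathlib

noncomputable section

open Polynomial
open scoped Pointwise

/-- The cyclic code of length `n` over `K` whose complete defining set is `Z ⊆ L`,
where `L` is an extension of `K` containing the `n`-th roots of unity:
codewords are those `c` whose associated polynomial vanishes on `Z`. -/
def cyclicCodeOn (K L : Type) [Field K] [Field L] [Algebra K L]
    (n : ℕ) (Z : Set L) : Submodule K (Fin n → K) where
  carrier := {c | ∀ β ∈ Z, ∑ i : Fin n, algebraMap K L (c i) * β ^ (i : ℕ) = 0}
  add_mem' := by
    intro a b ha hb β hβ
    simp only [Pi.add_apply, map_add, add_mul, Finset.sum_add_distrib]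
    rw [ha β hβ, hb β hβ, add_zero]
  zero_mem' := by intro β hβ; simp
  smul_mem' := by
    intro r a ha β hβ
    simp only [Pi.smul_apply, smul_eq_mul, map_mul, mul_assoc, ← Finset.mul_sum]
    rw [ha β hβ, mul_zero]

/-- Cyclic code of length `n` over `F` with complete defining set `Z ⊆ F`. -/
abbrev cyclicCode (F : Type) [Field F] (n : ℕ) (Z : Set F) : Submodule F (Fin n → F) :=
  cyclicCodeOn F F n Z

/-- The dual code of a code `C ⊆ F^n` (under the standard inner product). -/
def dualSet (F : Type) [Field F] (n : ℕ) (C : Set (Fin n → F)) : Set (Fin n → F) :=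
  {v | ∀ c ∈ C, ∑ i : Fin n, v i * c i = 0}

open Classical in
/-- Hamming weight of a vector. -/
def wt {F : Type} [Zero F] {n : ℕ} (c : Fin n → F) : ℕ :=
  (Finset.univ.filter (fun i => c i ≠ 0)).card

/-- `d` is the minimum Hamming distance (= minimum nonzero weight) of the code `C`. -/
def IsMinDist {F : Type} [Zero F] {n : ℕ} (C : Set (Fin n → F)) (d : ℕ) : Prop :=
  (∃ c ∈ C, c ≠ 0 ∧ wt c = d) ∧ ∀ c ∈ C, c ≠ 0 → d ≤ wt c

open Classical in
/-- `C` has `(r, δ)`-locality: every coordinate lies in a recovery set `S` of size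
at most `r + δ - 1` such that the punctured code `C|_S` has minimum distance `≥ δ`. -/
def HasLocality {F : Type} [Zero F] {n : ℕ} (C : Set (Fin n → F)) (r δ : ℕ) : Prop :=
  ∀ i : Fin n, ∃ S : Finset (Fin n), i ∈ S ∧ S.card ≤ r + δ - 1 ∧
    ∀ c ∈ C, ∀ c' ∈ C, (∃ j ∈ S, c j ≠ c' j) →
      δ ≤ (S.filter (fun j => c j ≠ c' j)).card

/-- The polynomial `c₀ + c₁ x + ⋯ + c_{n-1} x^{n-1}` associated to a vector. -/
def vecPoly {F : Type} [Semiring F] {n : ℕ} (c : Fin n → F) : Polynomial F :=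
  ∑ i : Fin n, Polynomial.C (c i) * Polynomial.X ^ (i : ℕ)

/-- The cyclic code of length `n` generated by `g(x)` (a divisor of `x^n - 1`). -/
def codeOfGen (F : Type) [Field F] (n : ℕ) (g : Polynomial F) : Set (Fin n → F) :=
  {c | g ∣ vecPoly c}

/-- Ceiling division `⌈a / b⌉` on naturals. -/
def ceilDiv' (a b : ℕ) : ℕ := (a + b - 1) / b

/-- The code parameters meet the Singleton-like bound for `(r, δ)`-LRCs:
`d = n - k - (⌈k/r⌉ - 1)(δ - 1) + 1`. -/
def SingletonOpt (n k r δ d : ℕ) : Prop :=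
  d = n - k - (ceilDiv' k r - 1) * (δ - 1) + 1

/-!
Put `m = r + δ - 1` and `w = (δ - 2) / 2`, so that `n = ν * m`. The exponents of `A * B` contain
modulo `n` all translates of `[-w, w]` by multiples of `m`. Since `α ^ m` has order `ν`, the
translates separate the residue classes modulo `ν` of the coordinates: the restriction of a codeword
to each class vanishes at `δ - 1` consecutive powers of `α`, and so has weight at least `δ` or is
zero. This is the locality. The consecutive exponents `[-(ℓ * m + i + w), ℓ * m + i + w]` bound the
minimum distance from below. As `q` is `±1` modulo `n`, the set `A * B` is stable under the `q`-th
power map, so that its monic polynomial has coefficients in `K` and the dimension is `n` minus the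
number of exponents. The Singleton-like bound, applied to these values, leaves no room: the lower
bound on the distance is attained.
-/

section Singleton

variable {K : Type} [Field K]

/-- The subcode of `C` of the words that vanish on `T`, kept at full length: it is the code
shortened at `T` without deleting the coordinates in `T`. -/
def shortened {ι : Type*} (C : Submodule K (ι → K)) (T : Finset ι) : Submodule K (ι → K) :=
  C ⊓ Submodule.pi T fun _ => ⊥

theorem mem_shortened {ι : Type*} {C : Submodule K (ι → K)} {T : Finset ι} {c : ι → K} :
    c ∈ shortened C T ↔ c ∈ C ∧ ∀ j ∈ T, c j = 0 := by
  simp [shortened, Submodule.mem_pi]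

theorem finrank_shortened_le {ι : Type*} [Finite ι] [DecidableEq ι] (C : Submodule K (ι → K))
    (T R : Finset ι) :
    Module.finrank K (shortened C T) ≤ Module.finrank K (shortened C (T ∪ R)) + R.card := by
  let restrict : shortened C T →ₗ[K] R → K :=
    (LinearMap.funLeft K K ((↑) : R → ι)).domRestrict (shortened C T)
  have hker : restrict.ker.map (shortened C T).subtype = shortened C (T ∪ R) := by
    ext c
    simp only [restrict, LinearMap.ker_domRestrict, Submodule.map_comap_subtype, Submodule.mem_inf,
      mem_shortened, LinearMap.mem_ker, funext_iff, LinearMap.funLeft_apply, Pi.zero_apply,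
      Subtype.forall, Finset.mem_union, or_imp, forall_and, and_assoc]
  have hrange : Module.finrank K restrict.range ≤ R.card := by
    simpa using Submodule.finrank_le restrict.range
  rw [← hker, Submodule.finrank_map_subtype_eq, ← restrict.finrank_range_add_finrank_ker, add_comm]
  gcongr

variable {n r δ : ℕ} {C : Submodule K (Fin n → K)}

open Classical in
theorem HasLocality.exists_recovery_set (hC : HasLocality (C : Set (Fin n → K)) r δ) (i : Fin n) :
    ∃ S : Finset (Fin n), i ∈ S ∧ S.card ≤ r + δ - 1 ∧
      ∀ c ∈ C, (∃ j ∈ S, c j ≠ 0) → δ ≤ (S.filter fun j => c j ≠ 0).card := by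
  obtain ⟨S, hiS, hcard, hS⟩ := hC i
  exact ⟨S, hiS, hcard, fun c hc => by simpa using hS c hc 0 C.zero_mem⟩

/- A recovery set `S` of a coordinate on which `shortened C T` does not vanish contains at least `δ`
coordinates outside `T`. Forcing all but `δ - 1` of them to be zero forces them all to be zero, so
adjoining `S` to `T` gains `δ - 1` coordinates for free. -/
theorem HasLocality.exists_shortened (hC : HasLocality (C : Set (Fin n → K)) r δ) (hδ : 0 < δ)
    {T : Finset (Fin n)} (hT : shortened C T ≠ ⊥) :
    ∃ T' : Finset (Fin n),
      Module.finrank K (shortened C T) ≤ Module.finrank K (shortened C T') + r ∧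
      T.card + Module.finrank K (shortened C T) + (δ - 1) ≤
        T'.card + Module.finrank K (shortened C T') := by
  classical
  obtain ⟨c, hcT, hc0⟩ := Submodule.exists_mem_ne_zero_of_ne_bot hT
  obtain ⟨p, hp⟩ := Function.ne_iff.1 hc0
  obtain ⟨S, hpS, hScard, hS⟩ := hC.exists_recovery_set p
  have hδS : δ ≤ (S \ T).card := by
    refine (hS c (mem_shortened.1 hcT).1 ⟨p, hpS, hp⟩).trans (Finset.card_le_card fun j hj => ?_)
    obtain ⟨hjS, hj⟩ := Finset.mem_filter.1 hj
    exact Finset.mem_sdiff.2 ⟨hjS, fun hjT => hj ((mem_shortened.1 hcT).2 j hjT)⟩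
  obtain ⟨R, hR, hRcard⟩ : ∃ R ⊆ S \ T, R.card = δ - 1 :=
    Finset.exists_subset_card_eq (by omega)
  have hfree : shortened C (T ∪ ((S \ T) \ R)) ≤ shortened C (T ∪ S) := by
    intro c hc
    obtain ⟨hcC, hc⟩ := mem_shortened.1 hc
    suffices hcS : ∀ j ∈ S, c j = 0 by
      refine mem_shortened.2 ⟨hcC, fun j hj => ?_⟩
      rcases Finset.mem_union.1 hj with hjT | hjS
      exacts [hc j (Finset.mem_union_left _ hjT), hcS j hjS]
    by_contra! hne
    have hsupport : (S.filter fun j => c j ≠ 0) ⊆ R := by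
      intro j hj
      have := hc j
      grind
    have := (hS c hcC hne).trans (Finset.card_le_card hsupport)
    omega
  have hdrop := finrank_shortened_le C T ((S \ T) \ R)
  have hmono := Submodule.finrank_mono hfree
  have hcard : (T ∪ S).card = T.card + (S \ T).card := by
    rw [← Finset.union_sdiff_self_eq_union, Finset.card_union_of_disjoint Finset.disjoint_sdiff]
  have hSTcard : (S \ T).card ≤ S.card := Finset.card_le_card Finset.sdiff_subset
  rw [Finset.card_sdiff_of_subset hR] at hdrop
  exact ⟨T ∪ S, by omega, by omega⟩

theorem HasLocality.exists_shortened_of_mul_lt (hC : HasLocality (C : Set (Fin n → K)) r δ)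
    (hδ : 0 < δ) {t : ℕ} (ht : t * r < Module.finrank K C) :
    ∃ T : Finset (Fin n), Module.finrank K C ≤ Module.finrank K (shortened C T) + t * r ∧
      Module.finrank K C + t * (δ - 1) ≤ T.card + Module.finrank K (shortened C T) := by
  induction t with
  | zero =>
    have : shortened C ∅ = C := by ext; simp [mem_shortened]
    exact ⟨∅, by rw [this]; simp, by rw [this]; simp⟩
  | succ t ih =>
    rw [add_one_mul] at ht
    obtain ⟨T, hrank, hcard⟩ := ih (by omega)
    have hT : shortened C T ≠ ⊥ := Submodule.one_le_finrank_iff.1 (by omega)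
    obtain ⟨T', hrank', hcard'⟩ := hC.exists_shortened hδ hT
    exact ⟨T', by rw [add_one_mul]; omega, by rw [add_one_mul]; omega⟩

/- The Singleton-like bound for `(r, δ)`-LRCs, usually stated with `t = ⌈k / r⌉ - 1`, the largest
admissible value. -/
theorem HasLocality.exists_wt_add_finrank_add_le (hC : HasLocality (C : Set (Fin n → K)) r δ)
    (hδ : 0 < δ) {t : ℕ} (ht : t * r < Module.finrank K C) :
    ∃ c ∈ C, c ≠ 0 ∧ wt c + Module.finrank K C + t * (δ - 1) ≤ n + 1 := by
  classical
  obtain ⟨T, hrank, hcard⟩ := hC.exists_shortened_of_mul_lt hδ ht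
  have hle : Module.finrank K (shortened C T) ≤ Tᶜ.card := by
    have hbot : shortened C (T ∪ Tᶜ) = ⊥ := by
      rw [Finset.union_compl, eq_bot_iff]
      exact fun c hc => funext fun j => (mem_shortened.1 hc).2 j (Finset.mem_univ j)
    have hle := finrank_shortened_le C T Tᶜ
    rwa [hbot, finrank_bot, zero_add] at hle
  obtain ⟨R, hR, hRcard⟩ : ∃ R ⊆ Tᶜ, R.card = Module.finrank K (shortened C T) - 1 :=
    Finset.exists_subset_card_eq (by omega)
  have hne : shortened C (T ∪ R) ≠ ⊥ := by
    have := finrank_shortened_le C T R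
    exact Submodule.one_le_finrank_iff.1 (by omega)
  obtain ⟨c, hc, hc0⟩ := Submodule.exists_mem_ne_zero_of_ne_bot hne
  obtain ⟨hcC, hc⟩ := mem_shortened.1 hc
  have hwt : wt c ≤ (T ∪ R)ᶜ.card := Finset.card_le_card fun j hj =>
    Finset.mem_compl.2 fun hjTR => (Finset.mem_filter.1 hj).2 (hc j hjTR)
  have hcardTR : (T ∪ R).card = T.card + R.card :=
    Finset.card_union_of_disjoint (disjoint_compl_right.mono_right hR)
  rw [Finset.card_compl, Fintype.card_fin] at hwt hle
  exact ⟨c, hcC, hc0, by omega⟩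

theorem ceilDiv'_mul_sub {a b r : ℕ} (ha : 0 < a) (hb : b < r) : ceilDiv' (a * r - b) r = a := by
  obtain ⟨a, rfl⟩ := Nat.exists_eq_add_of_lt ha
  rw [ceilDiv', Nat.div_eq_iff (by omega)]
  simp only [add_mul]
  omega

theorem ceilDiv'_sub_one_mul_lt {k r : ℕ} (hk : 0 < k) : (ceilDiv' k r - 1) * r < k := by
  rcases r.eq_zero_or_pos with rfl | hr
  · simpa
  · have hceil : ceilDiv' k r = (k - 1) / r + 1 := by
      rw [ceilDiv', show k + r - 1 = k - 1 + r by omega, Nat.add_div_right _ hr]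
    have := Nat.div_mul_le_self (k - 1) r
    rw [hceil, Nat.add_sub_cancel]
    omega

theorem HasLocality.isMinDist_and_singletonOpt (hC : HasLocality (C : Set (Fin n → K)) r δ)
    (hδ : 0 < δ) {d k : ℕ} (hk : Module.finrank K C = k) (hk0 : 0 < k)
    (hd : ∀ c ∈ C, c ≠ 0 → d ≤ wt c) (hsum : d + k + (ceilDiv' k r - 1) * (δ - 1) = n + 1) :
    IsMinDist (C : Set (Fin n → K)) d ∧ SingletonOpt n k r δ d := by
  classical
  subst hk
  obtain ⟨c, hcC, hc0, hc⟩ := hC.exists_wt_add_finrank_add_le hδ (ceilDiv'_sub_one_mul_lt hk0)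
  have hwt : wt c = d := le_antisymm (by omega) (hd c hcC hc0)
  have hpos : 0 < wt c := by
    obtain ⟨j, hj⟩ := Function.ne_iff.1 hc0
    exact Finset.card_pos.2 ⟨j, Finset.mem_filter.2 ⟨Finset.mem_univ j, hj⟩⟩
  exact ⟨⟨⟨c, hcC, hc0, hwt⟩, hd⟩, by unfold SingletonOpt; omega⟩

end Singleton

section Zeros

theorem eq_zero_of_sum_mul_pow_eq_zero {ι R : Type*} [CommRing R] [IsDomain R] {S : Finset ι}
    {x a : ι → R} (hx : Set.InjOn x S) (h : ∀ t < S.card, ∑ j ∈ S, a j * x j ^ t = 0) :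
    ∀ j ∈ S, a j = 0 := by
  let e := S.equivFin.symm
  have hzero : (fun k => a (e k)) = 0 :=
    Matrix.eq_zero_of_forall_pow_sum_mul_pow_eq_zero (f := fun k => x (e k))
      (hx.injective.comp e.injective)
      fun t => by
        rw [← h t t.2, ← S.sum_coe_sort]
        exact e.sum_comp fun k : S => a k * x k ^ (t : ℕ)
  intro j hj
  simpa [e] using congrFun hzero (S.equivFin ⟨j, hj⟩)

variable {K L : Type} [Field K] [Field L] [Algebra K L] {n : ℕ} {α : L}

theorem eq_zero_of_sum_mul_zpow_pow_eq_zero (hα : IsPrimitiveRoot α n) {S : Finset (Fin n)}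
    {c : Fin n → L} {b : ℤ}
    (h : ∀ t < S.card, ∑ j ∈ S, c j * (α ^ (b + t : ℤ)) ^ (j : ℕ) = 0) :
    ∀ j ∈ S, c j = 0 := by
  intro j hj
  have hα0 : α ≠ 0 := hα.ne_zero (Fin.pos j).ne'
  have hinj : Set.InjOn (fun k : Fin n => α ^ (k : ℕ)) S :=
    fun k _ k' _ hkk' => Fin.ext (hα.pow_inj k.2 k'.2 hkk')
  have hzero := eq_zero_of_sum_mul_pow_eq_zero (a := fun k => c k * (α ^ b) ^ (k : ℕ)) hinj
    (fun t ht => by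
      rw [← h t ht]
      refine Finset.sum_congr rfl fun k _ => ?_
      rw [zpow_add₀ hα0, zpow_natCast, mul_pow, pow_right_comm, mul_assoc]) j hj
  exact (mul_eq_zero.1 hzero).resolve_right (pow_ne_zero _ (zpow_ne_zero _ hα0))

open Classical in
theorem lt_card_support_of_sum_eq_zero (hα : IsPrimitiveRoot α n) {S : Finset (Fin n)}
    {c : Fin n → K} {b : ℤ} {d : ℕ}
    (h : ∀ t < d, ∑ j ∈ S, algebraMap K L (c j) * (α ^ (b + t : ℤ)) ^ (j : ℕ) = 0)
    (hc : ∃ j ∈ S, c j ≠ 0) : d < (S.filter fun j => c j ≠ 0).card := by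
  by_contra! hle
  obtain ⟨j, hjS, hj⟩ := hc
  refine hj ((map_eq_zero (algebraMap K L)).1 (eq_zero_of_sum_mul_zpow_pow_eq_zero hα (b := b)
    (S := S.filter fun j => c j ≠ 0) (c := fun j => algebraMap K L (c j)) (fun t ht => ?_) j
    (Finset.mem_filter.2 ⟨hjS, hj⟩)))
  rw [← h t (ht.trans_le hle)]
  refine Finset.sum_filter_of_ne fun k _ hk hk0 => hk ?_
  rw [hk0, map_zero, zero_mul]

/- The BCH bound. -/
theorem lt_wt_of_forall_zpow_mem (hα : IsPrimitiveRoot α n) {Z : Set L} {b : ℤ} {d : ℕ}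
    (hZ : ∀ t < d, α ^ (b + t : ℤ) ∈ Z) {c : Fin n → K} (hc : c ∈ cyclicCodeOn K L n Z)
    (hc0 : c ≠ 0) : d < wt c :=
  lt_card_support_of_sum_eq_zero hα (fun t ht => hc _ (hZ t ht)) <| by
    simpa using Function.ne_iff.1 hc0

/-- The coordinates in `{0, …, n - 1}` congruent to `a` modulo `ν`, for `a < ν`: the recovery sets
of the codes below. -/
def residueClass (n ν a : ℕ) : Finset (Fin n) :=
  Finset.univ.filter fun j => (j : ℕ) % ν = a

theorem mem_residueClass {ν a : ℕ} {j : Fin n} : j ∈ residueClass n ν a ↔ (j : ℕ) % ν = a := by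
  simp [residueClass]

theorem card_residueClass_le (ν m a : ℕ) : (residueClass (ν * m) ν a).card ≤ m := by
  have hmaps : ∀ j ∈ residueClass (ν * m) ν a, (j : ℕ) / ν ∈ Finset.range m := fun j _ =>
    Finset.mem_range.2 (Nat.div_lt_of_lt_mul j.2)
  have hinj : Set.InjOn (fun j : Fin (ν * m) => (j : ℕ) / ν) (residueClass (ν * m) ν a) := by
    intro j hj k hk hjk
    refine Fin.ext ?_
    rw [← Nat.mod_add_div j ν, ← Nat.mod_add_div k ν, mem_residueClass.1 hj, mem_residueClass.1 hk,
      show (j : ℕ) / ν = k / ν from hjk]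
  exact (Finset.card_le_card_of_injOn _ hmaps hinj).trans_eq (Finset.card_range m)

/- The left-hand sides are the values of a Vandermonde system in the `ν` partial sums over the
residue classes. -/
theorem sum_residueClass_eq_zero {ν : ℕ} {ζ : L} (hζ : IsPrimitiveRoot ζ ν) {f : Fin n → L}
    (h : ∀ u < ν, ∑ j, f j * (ζ ^ u) ^ (j : ℕ) = 0) {a : ℕ} (ha : a < ν) :
    ∑ j ∈ residueClass n ν a, f j = 0 := by
  have hinj : Set.InjOn (fun a => ζ ^ a) (Finset.range ν : Set ℕ) := fun a ha a' ha' haa' =>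
    hζ.pow_inj (Finset.mem_range.1 ha) (Finset.mem_range.1 ha') haa'
  refine eq_zero_of_sum_mul_pow_eq_zero (a := fun a => ∑ j ∈ residueClass n ν a, f j) hinj
    (fun u hu => ?_) a (Finset.mem_range.2 ha)
  have hmod : ∀ j ∈ (Finset.univ : Finset (Fin n)), (j : ℕ) % ν ∈ Finset.range ν := fun j _ =>
    Finset.mem_range.2 (Nat.mod_lt _ (by omega))
  rw [Finset.card_range] at hu
  rw [← h u hu, ← Finset.sum_fiberwise_of_maps_to hmod]
  refine Finset.sum_congr rfl fun a _ => ?_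
  rw [Finset.sum_mul]
  refine Finset.sum_congr rfl fun j hj => ?_
  have hpow : ζ ^ ((j : ℕ) % ν) = ζ ^ (j : ℕ) := by rw [hζ.eq_orderOf, pow_mod_orderOf]
  rw [← mem_residueClass.1 hj, hpow, pow_right_comm]

theorem hasLocality_cyclicCodeOn {ν r δ : ℕ} (hα : IsPrimitiveRoot α (ν * (r + δ - 1))) {Z : Set L}
    {b : ℤ}
    (hZ : ∀ u < ν, ∀ t < δ - 1, α ^ (u * (r + δ - 1)) * α ^ (b + t : ℤ) ∈ Z) :
    HasLocality (cyclicCodeOn K L (ν * (r + δ - 1)) Z : Set (Fin (ν * (r + δ - 1)) → K)) r δ := by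
  classical
  intro p
  have hn : 0 < ν * (r + δ - 1) := Fin.pos p
  have hζ : IsPrimitiveRoot (α ^ (r + δ - 1)) ν := hα.pow hn (mul_comm _ _)
  refine ⟨residueClass _ ν ((p : ℕ) % ν), mem_residueClass.2 rfl, card_residueClass_le _ _ _,
    fun c hc c' hc' hne => ?_⟩
  have hsum : ∀ t < δ - 1, ∑ j ∈ residueClass _ ν ((p : ℕ) % ν),
      algebraMap K L ((c - c') j) * (α ^ (b + t : ℤ)) ^ (j : ℕ) = 0 := fun t ht =>
    sum_residueClass_eq_zero hζ (fun u hu => by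
      rw [← Submodule.sub_mem _ hc hc' _ (hZ u hu t ht)]
      refine Finset.sum_congr rfl fun j _ => ?_
      rw [mul_comm u, pow_mul, mul_pow, mul_assoc, mul_comm ((α ^ (b + t : ℤ)) ^ _)])
      (Nat.mod_lt _ (Nat.pos_of_mul_pos_right hn))
  have := lt_card_support_of_sum_eq_zero hα hsum (by simpa [sub_ne_zero] using hne)
  simp only [Pi.sub_apply, sub_ne_zero] at this
  omega

end Zeros

section Dimension

variable {K L : Type} [Field K] [Field L] [Algebra K L]

theorem mem_range_algebraMap_of_pow_card_eq_self [Fintype K] {x : L}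
    (hx : x ^ Fintype.card K = x) : x ∈ Set.range (algebraMap K L) := by
  have hsplits : (X ^ Fintype.card K - X : K[X]).Splits := by
    simpa using splits_X_pow_nat_card_sub_X (K := K)
  have hroot : x ∈ ((X ^ Fintype.card K - X : K[X]).map (algebraMap K L)).roots := by
    rw [Polynomial.map_sub, Polynomial.map_pow, map_X,
      mem_roots (FiniteField.X_pow_card_sub_X_ne_zero L Fintype.one_lt_card)]
    simp [hx]
  rw [hsplits.roots_map, FiniteField.roots_X_pow_card_sub_X] at hroot
  obtain ⟨y, -, hy⟩ := Multiset.mem_map.1 hroot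
  exact ⟨y, hy⟩

theorem exists_monic_map_eq_prod_X_sub_C [Fintype K] {Z : Finset L}
    (hZ : ∀ z ∈ Z, z ^ Fintype.card K ∈ Z) :
    ∃ g : K[X], g.map (algebraMap K L) = ∏ z ∈ Z, (X - C z) ∧ g.natDegree = Z.card ∧ g.Monic := by
  let φ := FiniteField.frobeniusAlgHom K L
  have hinj : Set.InjOn φ Z := φ.toRingHom.injective.injOn
  have hfix : (∏ z ∈ Z, (X - C z)).map (φ : L →+* L) = ∏ z ∈ Z, (X - C z) := by
    rw [Polynomial.map_prod]
    exact Finset.prod_nbij φ hZ hinj (Finset.surjOn_of_injOn_of_card_le φ hZ hinj le_rfl)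
      fun z _ => by simp
  have hlifts : ∏ z ∈ Z, (X - C z) ∈ lifts (algebraMap K L) := by
    refine (lifts_iff_coeff_lifts _).2 fun k => mem_range_algebraMap_of_pow_card_eq_self ?_
    conv_rhs => rw [← hfix, coeff_map]
    rfl
  obtain ⟨g, hmap, hdeg, hmonic⟩ :=
    lifts_and_natDegree_eq_and_monic hlifts (monic_prod_X_sub_C id Z)
  exact ⟨g, hmap, hdeg.trans (natDegree_finsetProd_X_sub_C_eq_card Z id), hmonic⟩

theorem degreeLTEquiv_mem_cyclicCodeOn_iff {n : ℕ} {Z : Set L} {p : degreeLT K n} :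
    degreeLTEquiv K n p ∈ cyclicCodeOn K L n Z ↔ ∀ β ∈ Z, aeval β (p : K[X]) = 0 := by
  refine forall₂_congr fun β _ => ?_
  rw [aeval_def, eval₂_eq_sum, ← sum_fin _ (by simp) (mem_degreeLT.1 p.2)]
  rfl

theorem dvd_iff_forall_aeval_eq_zero {Z : Finset L} {g : K[X]}
    (hg : g.map (algebraMap K L) = ∏ z ∈ Z, (X - C z)) {p : K[X]} :
    g ∣ p ↔ ∀ z ∈ Z, aeval z p = 0 := by
  have hroot : ∀ z, X - C z ∣ p.map (algebraMap K L) ↔ aeval z p = 0 := fun z => by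
    rw [dvd_iff_isRoot, IsRoot, eval_map_algebraMap]
  rw [← map_dvd_map' (algebraMap K L), hg]
  refine ⟨fun h z hz => (hroot z).1 ((Finset.dvd_prod_of_mem (fun z => X - C z) hz).trans h),
    fun h => ?_⟩
  have hcoprime : Pairwise (Function.onFun IsCoprime fun z : L => X - C z) :=
    pairwise_coprime_X_sub_C (s := fun z => z) fun _ _ hz => hz
  exact Finset.prod_dvd_of_coprime (hcoprime.set_pairwise _) fun z hz => (hroot z).2 (h z hz)

theorem finrank_ker_mkₐ_domRestrict_degreeLT {g : K[X]} (hg : g.Monic) {n : ℕ}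
    (hn : g.natDegree ≤ n) :
    Module.finrank K ((AdjoinRoot.mkₐ g).toLinearMap.domRestrict (degreeLT K n)).ker + g.natDegree
      = n := by
  set reduce := (AdjoinRoot.mkₐ g).toLinearMap.domRestrict (degreeLT K n)
  have hsurj : reduce.range = ⊤ := LinearMap.range_eq_top.2 fun y => by
    obtain ⟨p, rfl⟩ := AdjoinRoot.mk_surjective y
    have hdeg : (p %ₘ g).degree < n :=
      (degree_modByMonic_lt p hg).trans_le (degree_le_of_natDegree_le hn)
    refine ⟨⟨p %ₘ g, mem_degreeLT.2 hdeg⟩, AdjoinRoot.mk_eq_mk.2 (show g ∣ p %ₘ g - p from ?_)⟩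
    rw [modByMonic_eq_sub_mul_div, sub_sub_cancel_left]
    exact (dvd_mul_right g _).neg_right
  have hrank := reduce.finrank_range_add_finrank_ker
  rwa [hsurj, finrank_top, (AdjoinRoot.powerBasis' hg).finrank, AdjoinRoot.powerBasis'_dim,
    (degreeLTEquiv K n).finrank_eq, Module.finrank_fin_fun, add_comm] at hrank

theorem finrank_cyclicCodeOn_add_card [Fintype K] {n : ℕ} {Z : Finset L}
    (hZ : ∀ z ∈ Z, z ^ Fintype.card K ∈ Z) (hn : Z.card ≤ n) :
    Module.finrank K (cyclicCodeOn K L n Z) + Z.card = n := by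
  obtain ⟨g, hmap, hdeg, hmonic⟩ := exists_monic_map_eq_prod_X_sub_C hZ
  have hcode : cyclicCodeOn K L n Z =
      ((AdjoinRoot.mkₐ g).toLinearMap.domRestrict (degreeLT K n)).ker.map
        (degreeLTEquiv K n : degreeLT K n →ₗ[K] Fin n → K) := by
    rw [Submodule.map_equiv_eq_comap_symm]
    ext c
    obtain ⟨p, rfl⟩ := (degreeLTEquiv K n).surjective c
    rw [degreeLTEquiv_mem_cyclicCodeOn_iff, Submodule.mem_comap, LinearEquiv.coe_coe,
      LinearEquiv.symm_apply_apply, LinearMap.mem_ker]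
    exact (dvd_iff_forall_aeval_eq_zero hmap).symm.trans AdjoinRoot.mk_eq_zero.symm
  rw [hcode, LinearEquiv.finrank_map_eq, ← hdeg]
  exact finrank_ker_mkₐ_domRestrict_degreeLT hmonic (hdeg.trans_le hn)

end Dimension

section Exponents

/-- The exponents of `A * B`, for `m = r + δ - 1` and `w = (δ - 2) / 2`: the translates of the
exponents `[-w, w]` of `B` by those of `A`, which are the interval `[-(ℓ * m + i), ℓ * m + i]` and
the points `u * m` with `ℓ < u < ν - ℓ`. -/
def zeroExponents (m ν ℓ i w : ℕ) : Finset ℤ :=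
  Finset.Icc (-(ℓ * m + i + w)) (ℓ * m + i + w) ∪
    (Finset.Ioo ℓ (ν - ℓ)).biUnion fun u => Finset.Icc (u * m - w) (u * m + w)

variable {m ν ℓ i w : ℕ} {e : ℤ}

theorem mem_zeroExponents :
    e ∈ zeroExponents m ν ℓ i w ↔
      |e| ≤ ℓ * m + i + w ∨ ∃ u : ℕ, (ℓ < u ∧ u < ν - ℓ) ∧ |e - u * m| ≤ w := by
  simp only [zeroExponents, Finset.mem_union, Finset.mem_biUnion, Finset.mem_Icc, Finset.mem_Ioo,
    abs_le, neg_le_sub_iff_le_add, sub_le_iff_le_add, add_comm (w : ℤ)]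

theorem exists_mem_zeroExponents_modEq_mul_add (he : |e| ≤ w) {u : ℕ} (hu : u < ν) :
    ∃ f ∈ zeroExponents m ν ℓ i w, f ≡ u * m + e [ZMOD ν * m] := by
  simp only [mem_zeroExponents]
  rcases le_or_gt u ℓ with hle | hlt
  · have : (u * m : ℤ) ≤ ℓ * m := by gcongr
    have : (0 : ℤ) ≤ u * m := by positivity
    rw [abs_le] at he
    exact ⟨u * m + e, .inl (abs_le.2 ⟨by omega, by omega⟩), .rfl⟩
  rcases lt_or_ge u (ν - ℓ) with hlt' | hge
  · exact ⟨u * m + e, .inr ⟨u, ⟨hlt, hlt'⟩, by rwa [add_sub_cancel_left]⟩, .rfl⟩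
  · have : ((ν - u : ℤ) * m) ≤ ℓ * m := by gcongr; omega
    have : (0 : ℤ) ≤ (ν - u) * m := mul_nonneg (by omega) (by positivity)
    rw [sub_mul] at *
    rw [abs_le] at he
    exact ⟨u * m + e - ν * m, .inl (abs_le.2 ⟨by omega, by omega⟩), by simp [Int.ModEq]⟩

theorem exists_mem_zeroExponents_modEq_neg (he : e ∈ zeroExponents m ν ℓ i w) :
    ∃ f ∈ zeroExponents m ν ℓ i w, f ≡ -e [ZMOD ν * m] := by
  simp only [mem_zeroExponents] at he ⊢
  rcases he with he | ⟨u, hu, he⟩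
  · exact ⟨-e, .inl (by rwa [abs_neg]), .rfl⟩
  · refine ⟨-e + ν * m, .inr ⟨ν - u, by omega, ?_⟩, by simp [Int.ModEq]⟩
    rw [Nat.cast_sub (by omega), ← abs_neg]
    convert he using 2
    ring

theorem add_mul_lt_mul (hm : 2 * i + 2 * w < m) {u v : ℕ} (huv : u < v) :
    u * m + i + w < (v * m - w : ℤ) := by
  have : ((u + 1 : ℕ) * m : ℤ) ≤ v * m := by gcongr; omega
  push_cast at this
  linarith

theorem zeroExponents_subset_Ico (hm : 2 * i + 2 * w < m) (hℓ : 2 * ℓ < ν) :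
    zeroExponents m ν ℓ i w ⊆ Finset.Ico (-(ℓ * m + i + w) : ℤ) (-(ℓ * m + i + w) + ν * m) := by
  intro e he
  rw [Finset.mem_Ico]
  rcases mem_zeroExponents.1 he with he | ⟨u, hu, he⟩
  · have : ((2 * ℓ + 1 : ℕ) * m : ℤ) ≤ ν * m := by gcongr; omega
    push_cast at this
    constructor <;> linarith [abs_le.1 he]
  · have := add_mul_lt_mul hm hu.1
    have : (0 : ℤ) ≤ ℓ * m := by positivity
    have : ((u + ℓ + 1 : ℕ) * m : ℤ) ≤ ν * m := by gcongr; omega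
    push_cast at this
    constructor <;> linarith [abs_le.1 he]

theorem card_zeroExponents (hm : 2 * i + 2 * w < m) :
    (zeroExponents m ν ℓ i w).card
      = 2 * (ℓ * m + i + w) + 1 + (ν - 2 * ℓ - 1) * (2 * w + 1) := by
  have hsep : ∀ {u v : ℕ}, u < v →
      Disjoint (Finset.Icc (u * m - w : ℤ) (u * m + w)) (Finset.Icc (v * m - w : ℤ) (v * m + w)) :=
    fun huv => Finset.disjoint_left.2 fun e heu hev => by
      have := add_mul_lt_mul hm huv
      rw [Finset.mem_Icc] at heu hev
      omega
  rw [zeroExponents, Finset.card_union_of_disjoint, Finset.card_biUnion]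
  · have hcard : ∀ u : ℕ, (Finset.Icc (u * m - w : ℤ) (u * m + w)).card = 2 * w + 1 := fun u => by
      rw [Int.card_Icc]
      omega
    rw [Finset.sum_const_nat fun u _ => hcard u, Nat.card_Ioo, Int.card_Icc,
      show ν - ℓ - ℓ - 1 = ν - 2 * ℓ - 1 by omega]
    congr 1
    rw [← Nat.cast_mul]
    omega
  · exact fun u _ v _ huv => huv.lt_or_gt.elim hsep fun hvu => (hsep hvu).symm
  · refine (Finset.disjoint_biUnion_right _ _ _).2 fun u hu =>
      Finset.disjoint_left.2 fun e he heu => ?_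
    have := add_mul_lt_mul hm (Finset.mem_Ioo.1 hu).1
    rw [Finset.mem_Icc] at he heu
    omega

end Exponents

section ZeroSet

variable {K L : Type} [Field K] [Field L] [Algebra K L] {α : L} {m ν ℓ i w : ℕ}

theorem setOf_pow_or_inv_eq_image_zpow (M : ℕ) :
    {x : L | ∃ e ≤ M, x = α ^ e ∨ x = (α ^ e)⁻¹} = (fun e : ℤ => α ^ e) '' Set.Icc (-M : ℤ) M := by
  ext x
  constructor
  · rintro ⟨e, he, rfl | rfl⟩
    · exact ⟨e, ⟨by omega, by omega⟩, zpow_natCast α e⟩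
    · exact ⟨-e, ⟨by omega, by omega⟩, by simp⟩
  · rintro ⟨e, ⟨hle, hge⟩, rfl⟩
    obtain ⟨k, rfl | rfl⟩ := e.eq_nat_or_neg
    · exact ⟨k, by omega, .inl (zpow_natCast α k)⟩
    · exact ⟨k, by omega, .inr (by simp)⟩

theorem setOf_pow_mul_eq_image_zpow :
    {x : L | ∃ u, ℓ + 1 ≤ u ∧ u ≤ ν - ℓ - 1 ∧ x = α ^ (u * m)} =
      (fun e : ℤ => α ^ e) '' ((fun u : ℕ => (u * m : ℤ)) '' Set.Ioo ℓ (ν - ℓ)) := by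
  ext x
  simp only [Set.image_image, Set.mem_image, Set.mem_Ioo, Set.mem_ofPred_eq, ← and_assoc]
  refine exists_congr fun u => and_congr (by omega) ?_
  rw [← Nat.cast_mul, zpow_natCast, eq_comm]

theorem coe_zeroExponents :
    (zeroExponents m ν ℓ i w : Set ℤ) =
      (Set.Icc (-(ℓ * m + i : ℕ) : ℤ) (ℓ * m + i : ℕ) ∪
        (fun u : ℕ => (u * m : ℤ)) '' Set.Ioo ℓ (ν - ℓ)) + Set.Icc (-w : ℤ) w := by
  rw [Set.union_add, Set.Icc_add_Icc (by omega) (by omega)]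
  ext e
  rw [Finset.mem_coe, mem_zeroExponents, Set.mem_union]
  refine or_congr ?_ ?_
  · rw [Set.mem_Icc, abs_le]
    push_cast
    rw [neg_add _ (w : ℤ)]
  · simp only [Set.mem_add, Set.exists_mem_image, Set.mem_Ioo, Set.mem_Icc, abs_le]
    refine exists_congr fun u => and_congr_right fun _ => ⟨fun he => ⟨_, he, by ring⟩, ?_⟩
    rintro ⟨f, hf, rfl⟩
    rwa [add_sub_cancel_left]

theorem mul_eq_image_zpow_zeroExponents (hα0 : α ≠ 0) :
    ({x : L | ∃ e ≤ ℓ * m + i, x = α ^ e ∨ x = (α ^ e)⁻¹} ∪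
        {x : L | ∃ u, ℓ + 1 ≤ u ∧ u ≤ ν - ℓ - 1 ∧ x = α ^ (u * m)}) *
      {x : L | ∃ e ≤ w, x = α ^ e ∨ x = (α ^ e)⁻¹}
      = (fun e : ℤ => α ^ e) '' zeroExponents m ν ℓ i w := by
  rw [setOf_pow_or_inv_eq_image_zpow, setOf_pow_or_inv_eq_image_zpow, setOf_pow_mul_eq_image_zpow,
    ← Set.image_union, coe_zeroExponents]
  exact (Set.image_image2_distrib (zpow_add₀ hα0)).symm

theorem injOn_zpow_Ico {n : ℕ} (hα : IsPrimitiveRoot α n) (hα0 : α ≠ 0) (a : ℤ) :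
    Set.InjOn (fun e : ℤ => α ^ e) (Set.Ico a (a + n)) := by
  intro e he f hf hef
  have hone : α ^ (e - f) = 1 := by
    rw [zpow_sub₀ hα0, show α ^ e = α ^ f from hef, div_self (zpow_ne_zero f hα0)]
  refine sub_eq_zero.1 (Int.eq_zero_of_abs_lt_dvd ((hα.zpow_eq_one_iff_dvd _).1 hone) (abs_lt.2 ?_))
  rw [Set.mem_Ico] at he hf
  constructor <;> omega

theorem pow_eq_self_or_eq_inv {n q : ℕ} {z : L} (hz : z ^ n = 1) (hq : 0 < q)
    (hdvd : n ∣ q - 1 ∨ n ∣ q + 1) : z ^ q = z ∨ z ^ q = z⁻¹ := by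
  rcases hdvd with ⟨c, hc⟩ | ⟨c, hc⟩
  · rw [← Nat.sub_add_cancel hq, pow_succ, hc, pow_mul, hz, one_pow, one_mul]
    exact .inl rfl
  · exact .inr (eq_inv_of_mul_eq_one_left (by rw [← pow_succ, hc, pow_mul, hz, one_pow]))

/-- The defining set `A * B`, described by its exponents. -/
def zeroSet (α : L) (m ν ℓ i w : ℕ) : Set L :=
  (fun e : ℤ => α ^ e) '' zeroExponents m ν ℓ i w

theorem zpow_mem_zeroSet_of_modEq (hα : IsPrimitiveRoot α (ν * m)) (hα0 : α ≠ 0) {e : ℤ}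
    (he : ∃ f ∈ zeroExponents m ν ℓ i w, f ≡ e [ZMOD ν * m]) : α ^ e ∈ zeroSet α m ν ℓ i w := by
  obtain ⟨f, hf, hfe⟩ := he
  have hone : α ^ (f - e) = 1 :=
    (hα.zpow_eq_one_iff_dvd _).2 (by rw [Nat.cast_mul]; exact hfe.symm.dvd)
  have heq : α ^ f = α ^ e := by rw [← sub_add_cancel f e, zpow_add₀ hα0, hone, one_mul]
  exact ⟨f, hf, heq⟩

theorem inv_mem_zeroSet (hα : IsPrimitiveRoot α (ν * m)) (hα0 : α ≠ 0) {z : L}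
    (hz : z ∈ zeroSet α m ν ℓ i w) : z⁻¹ ∈ zeroSet α m ν ℓ i w := by
  obtain ⟨e, he, rfl⟩ := hz
  change (α ^ e)⁻¹ ∈ _
  rw [← zpow_neg]
  exact zpow_mem_zeroSet_of_modEq hα hα0 (exists_mem_zeroExponents_modEq_neg he)

theorem pow_mem_zeroSet (hα : IsPrimitiveRoot α (ν * m)) (hα0 : α ≠ 0) {q : ℕ} (hq : 0 < q)
    (hdvd : ν * m ∣ q - 1 ∨ ν * m ∣ q + 1) {z : L} (hz : z ∈ zeroSet α m ν ℓ i w) :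
    z ^ q ∈ zeroSet α m ν ℓ i w := by
  have hzn : z ^ (ν * m) = 1 := by
    obtain ⟨e, -, rfl⟩ := hz
    change (α ^ e) ^ (ν * m) = 1
    rw [← zpow_natCast, zpow_comm, zpow_natCast, hα.pow_eq_one, one_zpow]
  rcases pow_eq_self_or_eq_inv hzn hq hdvd with h | h
  · rwa [h]
  · exact h ▸ inv_mem_zeroSet hα hα0 hz

theorem hasLocality_zeroSet {r : ℕ} (hα : IsPrimitiveRoot α (ν * m)) (hα0 : α ≠ 0)
    (hm : m = r + 2 * w + 1) :
    HasLocality (cyclicCodeOn K L (ν * m) (zeroSet α m ν ℓ i w) : Set (Fin (ν * m) → K)) r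
      (2 * w + 2) := by
  obtain rfl : m = r + (2 * w + 2) - 1 := by omega
  refine hasLocality_cyclicCodeOn (b := -w) hα fun u hu t ht => ?_
  have ht' : |(-w + t : ℤ)| ≤ w := abs_le.2 ⟨by omega, by omega⟩
  rw [← zpow_natCast, ← zpow_add₀ hα0, Nat.cast_mul]
  exact zpow_mem_zeroSet_of_modEq hα hα0 (exists_mem_zeroExponents_modEq_mul_add ht' hu)

theorem finrank_zeroSet_add_card [Fintype K] (hα : IsPrimitiveRoot α (ν * m)) (hα0 : α ≠ 0)
    (hdvd : ν * m ∣ Fintype.card K - 1 ∨ ν * m ∣ Fintype.card K + 1)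
    (hm : 2 * i + 2 * w < m) (hℓ : 2 * ℓ < ν) :
    Module.finrank K (cyclicCodeOn K L (ν * m) (zeroSet α m ν ℓ i w)) +
      (zeroExponents m ν ℓ i w).card = ν * m := by
  classical
  have hsub := zeroExponents_subset_Ico hm hℓ
  have hinj : Set.InjOn (fun e : ℤ => α ^ e) (zeroExponents m ν ℓ i w) :=
    (injOn_zpow_Ico hα hα0 (-(ℓ * m + i + w))).mono fun e he => by
      rw [Nat.cast_mul, ← Finset.coe_Ico]
      exact hsub he
  have hcard := Finset.card_image_of_injOn hinj
  rw [zeroSet, ← hcard, ← Finset.coe_image]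
  refine finrank_cyclicCodeOn_add_card (fun z hz => ?_) ?_
  · rw [← Finset.mem_coe, Finset.coe_image] at hz ⊢
    exact pow_mem_zeroSet hα hα0 Fintype.card_pos hdvd hz
  · rw [hcard]
    refine (Finset.card_le_card hsub).trans_eq ?_
    rw [Int.card_Ico, add_sub_cancel_left, ← Nat.cast_mul, Int.toNat_natCast]

theorem finrank_zeroSet [Fintype K] {r : ℕ} (hα : IsPrimitiveRoot α (ν * m)) (hα0 : α ≠ 0)
    (hdvd : ν * m ∣ Fintype.card K - 1 ∨ ν * m ∣ Fintype.card K + 1)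
    (hm : m = r + 2 * w + 1) (hi : 2 * i < r) (hℓ : 2 * ℓ < ν) :
    Module.finrank K (cyclicCodeOn K L (ν * m) (zeroSet α m ν ℓ i w)) =
      (ν - 2 * ℓ) * r - 2 * i := by
  have hrank := finrank_zeroSet_add_card (K := K) (i := i) (w := w) hα hα0 hdvd (by omega) hℓ
  obtain ⟨s, rfl⟩ := Nat.exists_eq_add_of_lt hℓ
  rw [card_zeroExponents (by omega), show 2 * ℓ + s + 1 - 2 * ℓ - 1 = s by omega] at hrank
  rw [show 2 * ℓ + s + 1 - 2 * ℓ = s + 1 by omega]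
  subst hm
  refine eq_tsub_of_add_eq ?_
  linarith

theorem le_wt_of_mem_zeroSet (hα : IsPrimitiveRoot α (ν * m)) {c : Fin (ν * m) → K}
    (hc : c ∈ cyclicCodeOn K L (ν * m) (zeroSet α m ν ℓ i w)) (hc0 : c ≠ 0) :
    2 * w + 2 + 2 * i + 2 * ℓ * m ≤ wt c := by
  have hlt : 2 * (ℓ * m + i + w) + 1 < wt c := by
    refine lt_wt_of_forall_zpow_mem hα (b := -(ℓ * m + i + w : ℕ)) (fun t ht => ?_) hc hc0
    refine ⟨_, mem_zeroExponents.2 (.inl (abs_le.2 ⟨?_, ?_⟩)), rfl⟩ <;> push_cast <;> linarith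
  linarith

end ZeroSet

theorem stmt17_general (K L : Type) [Field K] [Fintype K] [Field L] [Algebra K L]
    (n r δ i ℓ : ℕ)
    (hn : 0 < n) (hr : 0 < r) (hδ : 2 ≤ δ) (hδeven : Even δ)
    (hdvd : n ∣ Fintype.card K - 1 ∨ n ∣ Fintype.card K + 1)
    (hrdn : (r + δ - 1) ∣ n)
    (α : L) (hα : IsPrimitiveRoot α n)
    (hi : i ≤ (r - 1) / 2) (hℓ : ℓ ≤ (n / (r + δ - 1) - 2) / 2)
    (A B : Set L)
    (hAdef : A = {x : L | ∃ e ≤ ℓ * (r + δ - 1) + i, x = α ^ e ∨ x = (α ^ e)⁻¹} ∪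
      {x : L | ∃ u, ℓ + 1 ≤ u ∧ u ≤ n / (r + δ - 1) - ℓ - 1 ∧ x = α ^ (u * (r + δ - 1))})
    (hBdef : B = {x : L | ∃ e ≤ (δ - 2) / 2, x = α ^ e ∨ x = (α ^ e)⁻¹}) :
    HasLocality (cyclicCodeOn K L n (A * B) : Set (Fin n → K)) r δ ∧
    Module.finrank K (cyclicCodeOn K L n (A * B))
      = (n / (r + δ - 1) - 2 * ℓ) * r - 2 * i ∧
    IsMinDist (cyclicCodeOn K L n (A * B) : Set (Fin n → K))
      (δ + 2 * i + 2 * ℓ * (r + δ - 1)) ∧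
    SingletonOpt n ((n / (r + δ - 1) - 2 * ℓ) * r - 2 * i) r δ
      (δ + 2 * i + 2 * ℓ * (r + δ - 1)) := by
  obtain ⟨w, rfl⟩ : ∃ w, δ = 2 * w + 2 := ⟨(δ - 2) / 2, by grind⟩
  obtain ⟨ν, rfl⟩ := exists_eq_mul_left_of_dvd hrdn
  have hν : 0 < ν := Nat.pos_of_mul_pos_right hn
  have hα0 : α ≠ 0 := hα.ne_zero hn.ne'
  rw [Nat.mul_div_cancel ν (by omega)] at hℓ hAdef ⊢
  generalize hm : r + (2 * w + 2) - 1 = m at *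
  have hAB : A * B = zeroSet α m ν ℓ i w := by
    rw [hAdef, hBdef, show (2 * w + 2 - 2) / 2 = w by omega]
    exact mul_eq_image_zpow_zeroExponents hα0
  have hm' : m = r + 2 * w + 1 := by omega
  have hi' : 2 * i < r := by omega
  have hℓ' : 2 * ℓ < ν := by omega
  have hloc := hasLocality_zeroSet (K := K) (ℓ := ℓ) (i := i) hα hα0 hm'
  have hrank := finrank_zeroSet (K := K) hα hα0 hdvd hm' hi' hℓ'
  have hsum := finrank_zeroSet_add_card (K := K) (w := w) (i := i) hα hα0 hdvd (by omega) hℓ'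
  rw [hAB]
  refine ⟨hloc, hrank, hloc.isMinDist_and_singletonOpt (by omega) hrank ?_
    (fun c hc hc0 => le_wt_of_mem_zeroSet hα hc hc0) ?_⟩
  · exact Nat.sub_pos_of_lt (hi'.trans_le (Nat.le_mul_of_pos_left r (by omega)))
  · rw [hrank, card_zeroExponents (by omega)] at hsum
    rw [ceilDiv'_mul_sub (by omega) hi', show 2 * w + 2 - 1 = 2 * w + 1 by omega]
    linarith

/-- Corollary 5.2(1) of the paper: explicit optimal cyclic `(r,δ)`-LRCs
of length `n ∣ q + 1` with `δ` even and `(r + δ - 1) ∣ n`. -/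
theorem stmt17 (K L : Type) [Field K] [Fintype K] [Field L] [Fintype L] [Algebra K L]
    (n r δ i ℓ : ℕ)
    (hn : 0 < n) (hr : 0 < r) (hδ : 2 ≤ δ) (hδeven : Even δ)
    (hdvd : n ∣ Fintype.card K + 1) (hcop : Nat.Coprime n (Fintype.card K))
    (hcard : Fintype.card L = Fintype.card K ^ 2)
    (hrdn : (r + δ - 1) ∣ n)
    (α : L) (hα : IsPrimitiveRoot α n)
    (hi : i ≤ (r - 1) / 2) (hℓ : ℓ ≤ (n / (r + δ - 1) - 2) / 2)
    (A B : Set L)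
    (hAdef : A = {x : L | ∃ e ≤ ℓ * (r + δ - 1) + i, x = α ^ e ∨ x = (α ^ e)⁻¹} ∪
      {x : L | ∃ u, ℓ + 1 ≤ u ∧ u ≤ n / (r + δ - 1) - ℓ - 1 ∧ x = α ^ (u * (r + δ - 1))})
    (hBdef : B = {x : L | ∃ e ≤ (δ - 2) / 2, x = α ^ e ∨ x = (α ^ e)⁻¹}) :
    HasLocality (cyclicCodeOn K L n (A * B) : Set (Fin n → K)) r δ ∧
    Module.finrank K (cyclicCodeOn K L n (A * B))
      = (n / (r + δ - 1) - 2 * ℓ) * r - 2 * i ∧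
    IsMinDist (cyclicCodeOn K L n (A * B) : Set (Fin n → K))
      (δ + 2 * i + 2 * ℓ * (r + δ - 1)) ∧
    SingletonOpt n ((n / (r + δ - 1) - 2 * ℓ) * r - 2 * i) r δ
      (δ + 2 * i + 2 * ℓ * (r + δ - 1)) :=
  stmt17_general K L n r δ i ℓ hn hr hδ hδeven (.inr hdvd) hrdn α hα hi hℓ A B hAdef hBdef
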